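/- For all m, k, ℓ, r ≥ 1 there exists n ∈ ℕ such that for every r-coloring of FIN_{≤k}(n)^[m], there exists a block sequence (b_0,…,b_{ℓ−1}) in FIN_k(n) of length ℓ such that TS_j(b_0,…,b_{ℓ−1})^[m] is monochromatic for every j = 1,2,…,k. -/

import Mathlib

/-!
The proof runs through ultrafilters on `ℕ → ℕ`, followed by a compactness argument.

An equivariant tower is a sequence `x j` of ultrafilters, `x j` concentrating on elements of
`FIN_j` with supports arbitrarily far out, such that `f (x j) = x (f j)` for every tetris function
`f`. Towers form a compact semigroup under coordinatewise addition, in which `y ↦ y + z` is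
continuous, and the multiples `j · u` of an idempotent `u` on `FIN_1` form an idempotent tower. The
main point is to find a tower with `x i + x j = x (max i j)` for all `i, j ≤ k` (`exists_tower`).

Right absorption, `x j + x i = x j` for `i ≤ j`, is arranged one level `p` at a time
(`exists_rightAbsorb`). Given an idempotent tower `x` with absorption below level `p`, the
descending sums `x j + x (j - 1) + ⋯ + x p` for `j > p` again form a tower: a tetris function
moves by steps of at most one, so it maps such a sum to one of the same shape with some terms
repeated (harmless by idempotence) and some terms below `p` (absorbed). So the towers that agree
with `x` up to `p` and absorb `x p` above form a nonempty closed subsemigroup, which contains an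
idempotent. Finally, the ascending sums `x 0 + ⋯ + x j` of a right absorbing tower satisfy
the full identity.

Given such a tower and a colouring of block sequences in `ℕ`, the colour of level `j` is the
`m`-fold iterated limit of the colouring along `x j`. The blocks `b i` are chosen one after the
other as generic members of `x k`; tetris subsequences are read from left to right, and the identity
`x i + x j = x (max i j)` says exactly that a generic next block keeps all the finitely many partial
readings on course for the limit colour (`Stage.Good.next`, `exists_blocks`).

If no `n` worked, a limit of bad colourings along a nonprincipal ultrafilter on `ℕ` would be a
colouring to which the infinite version applies; only finitely many block sequences are involved in
its conclusion, so one of the bad colourings agrees with the limit on all of them.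
-/

/-- `FINf k n`: functions `{0,…,n-1} → {0,…,k}` with maximum value `k`
(encoded as functions `ℕ → ℕ` vanishing from `n` on). -/
def FINf (k n : ℕ) : Set (ℕ → ℕ) :=
  {b | (∀ i, b i ≤ k) ∧ (∀ i, n ≤ i → b i = 0) ∧ ∃ i, i < n ∧ b i = k}

/-- `Supp b < Supp b'`. -/
def SuppLT (b b' : ℕ → ℕ) : Prop :=
  ∀ m, b m ≠ 0 → ∀ m', b' m' ≠ 0 → m < m'

/-- `f` is (the extension to `ℕ` of) a nondecreasing surjection `{0,…,k} → {0,…,j}`. -/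
def IsTetrisFn (k j : ℕ) (f : ℕ → ℕ) : Prop :=
  (∀ i i', i' ≤ i → i ≤ k → f i' ≤ f i) ∧ (∀ i, i ≤ k → f i ≤ j) ∧
    ∀ m, m ≤ j → ∃ i, i ≤ k ∧ f i = m

/-- A block sequence `(b_0,…,b_{ℓ-1})` in `FINf k n`. -/
def IsBlockSeqFin (k n ℓ : ℕ) (b : ℕ → ℕ → ℕ) : Prop :=
  (∀ i, i < ℓ → b i ∈ FINf k n) ∧ ∀ i, i + 1 < ℓ → SuppLT (b i) (b (i + 1))

/-- An element of `FIN_k(n)^[m]`: a block sequence in `FINf k n` of length `m`. -/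
def IsBlockTupleFin (k n m : ℕ) (t : Fin m → ℕ → ℕ) : Prop :=
  (∀ d, t d ∈ FINf k n) ∧
    ∀ (d : ℕ) (h : d + 1 < m), SuppLT (t ⟨d, Nat.lt_of_succ_lt h⟩) (t ⟨d + 1, h⟩)

/-- The set `TS_j(b_0,…,b_{ℓ-1})^[m]` inside `FIN_j(n)^[m]`: all `(a_0,…,a_{m-1})`
such that for some `0 = n_0 < n_1 < ⋯ < n_m ≤ ℓ`, `j_i ∈ {0,…,k}` and nondecreasing
surjections `f_i : {0,…,k} → {0,…,j_i}`, one has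
`a_d = f_{n_d}∘b_{n_d} + ⋯ + f_{n_{d+1}-1}∘b_{n_{d+1}-1}` and
`max {j_{n_d},…,j_{n_{d+1}-1}} = j` for every `d < m`. -/
def TSmfin (k j n m ℓ : ℕ) (b : ℕ → ℕ → ℕ) : Set (Fin m → ℕ → ℕ) :=
  {a | IsBlockTupleFin j n m a ∧ ∃ (ns : ℕ → ℕ) (js : ℕ → ℕ) (fs : ℕ → ℕ → ℕ),
    ns 0 = 0 ∧ (∀ d, d < m → ns d < ns (d + 1)) ∧ ns m ≤ ℓ ∧
    (∀ i, i < ns m → js i ≤ k ∧ IsTetrisFn k (js i) (fs i)) ∧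
    ∀ d : Fin m,
      (∀ i, ns d.val ≤ i → i < ns (d.val + 1) → js i ≤ j) ∧
      (∃ i, ns d.val ≤ i ∧ i < ns (d.val + 1) ∧ js i = j) ∧
      a d = ∑ i ∈ Finset.Ico (ns d.val) (ns (d.val + 1)), (fs i) ∘ (b i)}

open Filter

attribute [local instance] Ultrafilter.addSemigroup

/-! ### Tetris functions -/

/-- `f : ℕ → ℕ` fixes `0` and increases by steps of at most `1`. These are the maps of `ℕ` whose
restriction to each `{0,…,k}` is a nondecreasing surjection onto `{0,…,f k}`. -/
def Tet (f : ℕ → ℕ) : Prop :=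
  f 0 = 0 ∧ ∀ n, f n ≤ f (n + 1) ∧ f (n + 1) ≤ f n + 1

theorem Tet.mono {f : ℕ → ℕ} (hf : Tet f) : Monotone f :=
  monotone_nat_of_le_succ fun n => (hf.2 n).1

theorem Tet.le_self {f : ℕ → ℕ} (hf : Tet f) (n : ℕ) : f n ≤ n := by
  induction n with
  | zero => exact hf.1.le
  | succ n ih => have := (hf.2 n).2; omega

/-- The tetris functions that are constant from `k` on; these represent all tetris operations
on `FIN_k`. -/
def TetK (k : ℕ) : Set (ℕ → ℕ) := {f | Tet f ∧ ∀ n, k ≤ n → f n = f k}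

theorem TetK_finite (k : ℕ) : (TetK k).Finite := by
  refine Set.Finite.of_finite_image (f := fun f (i : Fin (k + 1)) => f i) ?_ ?_
  · refine (Set.Finite.pi' (t := fun _ : Fin (k + 1) => Set.Iic k)
      fun _ => Set.finite_Iic k).subset ?_
    rintro _ ⟨f, hf, rfl⟩ i
    exact (hf.1.le_self _).trans (Nat.lt_succ_iff.1 i.2)
  · intro f hf g hg h
    have key : ∀ i, i ≤ k → f i = g i := fun i hi => congrFun h ⟨i, Nat.lt_succ_of_le hi⟩
    funext n
    rcases le_total n k with hn | hn
    · exact key n hn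
    · rw [hf.2 n hn, hg.2 n hn, key k le_rfl]

theorem IsTetrisFn.zero {k j : ℕ} {f : ℕ → ℕ} (hf : IsTetrisFn k j f) : f 0 = 0 := by
  obtain ⟨i, hi, h0⟩ := hf.2.2 0 (Nat.zero_le _)
  have := hf.1 i 0 (Nat.zero_le _) hi
  omega

theorem IsTetrisFn.top {k j : ℕ} {f : ℕ → ℕ} (hf : IsTetrisFn k j f) : f k = j := by
  obtain ⟨i, hi, h0⟩ := hf.2.2 j le_rfl
  have := hf.1 k i hi le_rfl
  have := hf.2.1 k le_rfl
  omega

/-- Every nondecreasing surjection `{0,…,k} → {0,…,j}` extends, by a constant, to a tetris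
function on `ℕ`. -/
theorem IsTetrisFn.mem_TetK {k j : ℕ} {f : ℕ → ℕ} (hf : IsTetrisFn k j f) :
    (fun n => f (min n k)) ∈ TetK k := by
  refine ⟨⟨by simpa using hf.zero, fun n => ?_⟩, fun n hn => by simp [hn]⟩
  rcases le_or_gt k n with hn | hn
  · simp [hn, hn.trans (Nat.le_succ n)]
  · dsimp only
    rw [min_eq_left hn.le, min_eq_left (show n + 1 ≤ k from hn)]
    refine ⟨hf.1 _ _ (Nat.le_succ n) hn, ?_⟩
    by_contra! h
    -- a jump at `n` would leave the value `f n + 1` out of the range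
    obtain ⟨i, hi, hi'⟩ := hf.2.2 (f n + 1) (by have := hf.2.1 (n + 1) hn; omega)
    rcases le_or_gt i n with hin | hin
    · have := hf.1 n i hin hn.le
      omega
    · have := hf.1 i (n + 1) hin hi
      omega

/-! ### Ultrafilters on `FIN_j` -/

/-- The ultrafilters on `ℕ → ℕ` that concentrate on `FIN_j` and whose members have supports
escaping to infinity. -/
def FinU (j : ℕ) : Set (Ultrafilter (ℕ → ℕ)) :=
  {U | ∀ n, ∀ᶠ b in (U : Filter (ℕ → ℕ)), (∃ N, b ∈ FINf j N) ∧ ∀ i, i < n → b i = 0}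

theorem FinU_isClosed (j : ℕ) : IsClosed (FinU j) := by
  have : FinU j = ⋂ n, {U | {b | (∃ N, b ∈ FINf j N) ∧ ∀ i, i < n → b i = 0} ∈ U} := by
    ext U
    simp only [Set.mem_iInter]
    rfl
  rw [this]
  exact isClosed_iInter fun n => ultrafilter_isClosed_basic _

theorem FinU_add {i j : ℕ} {U V : Ultrafilter (ℕ → ℕ)} (hU : U ∈ FinU i) (hV : V ∈ FinU j) :
    U + V ∈ FinU (max i j) := by
  intro n
  rw [Ultrafilter.eventually_add]
  filter_upwards [hU n] with x ⟨⟨N, hx1, hx2, p, hp, hxp⟩, hx4⟩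
  filter_upwards [hV (max N n)] with y ⟨⟨N', hy1, hy2, q, hq, hyq⟩, hy4⟩
  have hor : ∀ t, x t = 0 ∨ y t = 0 := fun t => by
    rcases lt_or_ge t N with h | h
    · exact Or.inr (hy4 t (lt_max_of_lt_left h))
    · exact Or.inl (hx2 t h)
  refine ⟨⟨max N N', fun t => ?_, fun t ht => ?_, ?_⟩, fun t ht => ?_⟩
  · have := hx1 t
    have := hy1 t
    rcases hor t with h | h <;> simp only [Pi.add_apply, h] <;> omega
  · simp [hx2 t (le_trans (le_max_left _ _) ht), hy2 t (le_trans (le_max_right _ _) ht)]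
  · rcases le_total i j with h | h
    · refine ⟨q, lt_max_of_lt_right hq, ?_⟩
      have := hx1 q
      rcases hor q with h' | h' <;> simp only [Pi.add_apply, h'] <;> omega
    · refine ⟨p, lt_max_of_lt_left hp, ?_⟩
      have := hy1 p
      rcases hor p with h' | h' <;> simp only [Pi.add_apply, h'] <;> omega
  · simp [hx4 t ht, hy4 t (lt_max_of_lt_right ht)]

theorem eq_pure_of_mem_FinU_zero {U : Ultrafilter (ℕ → ℕ)} (hU : U ∈ FinU 0) : U = pure 0 := by
  have h : ({0} : Set (ℕ → ℕ)) ∈ U := by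
    filter_upwards [hU 0] with b ⟨⟨N, hb, _⟩, _⟩
    exact funext fun i => Nat.le_zero.1 (hb i)
  obtain ⟨x, hx, hU⟩ := Ultrafilter.eq_pure_of_finite_mem (Set.finite_singleton _) h
  rw [hU, Set.mem_singleton_iff.1 hx]

theorem add_pure_zero (U : Ultrafilter (ℕ → ℕ)) : U + pure 0 = U := by
  refine Ultrafilter.coe_inj.1 (Filter.ext' fun p => ?_)
  rw [Ultrafilter.eventually_add]
  simp

/-- The push-forward of an ultrafilter under `b ↦ f ∘ b`. -/
def pushU (f : ℕ → ℕ) (U : Ultrafilter (ℕ → ℕ)) : Ultrafilter (ℕ → ℕ) :=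
  U.map (fun b => f ∘ b)

theorem eventually_push {f : ℕ → ℕ} {U : Ultrafilter (ℕ → ℕ)} {p : (ℕ → ℕ) → Prop} :
    (∀ᶠ b in (pushU f U : Filter (ℕ → ℕ)), p b) ↔ ∀ᶠ b in (U : Filter (ℕ → ℕ)), p (f ∘ b) :=
  Iff.rfl

theorem push_continuous (f : ℕ → ℕ) : Continuous (pushU f) :=
  ultrafilterBasis_is_basis.continuous_iff.2 <| Set.forall_mem_range.mpr fun s =>
    ultrafilter_isOpen_basic ((fun b : ℕ → ℕ => f ∘ b) ⁻¹' s)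

/-- `b ↦ f ∘ b` is not additive, but it is on functions with disjoint supports, so its
push-forward is additive on the ultrafilters at hand. -/
theorem push_add {f : ℕ → ℕ} (hf : f 0 = 0) {i j : ℕ} {U V : Ultrafilter (ℕ → ℕ)}
    (hU : U ∈ FinU i) (hV : V ∈ FinU j) : pushU f (U + V) = pushU f U + pushU f V := by
  refine Ultrafilter.coe_inj.1 (Filter.ext' fun p => ?_)
  rw [eventually_push, Ultrafilter.eventually_add, Ultrafilter.eventually_add, eventually_push]
  refine eventually_congr ?_
  filter_upwards [hU 0] with x ⟨⟨N, hx1, hx2, _⟩, _⟩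
  rw [eventually_push]
  refine eventually_congr ?_
  filter_upwards [hV N] with y ⟨_, hy⟩
  have : f ∘ (x + y) = f ∘ x + f ∘ y := by
    funext t
    rcases lt_or_ge t N with h | h
    · simp [hy t h, hf]
    · simp [hx2 t h, hf]
  rw [this]

/-! ### Equivariant towers of ultrafilters -/

/-- The towers `x` of ultrafilters, `x j` living on `FIN_j`, that are equivariant under all tetris
functions: `f (x j) = x (f j)`. -/
def Tower : Set (ℕ → Ultrafilter (ℕ → ℕ)) :=
  {x | (∀ j, x j ∈ FinU j) ∧ ∀ f, Tet f → ∀ j, pushU f (x j) = x (f j)}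

theorem Tower_isClosed : IsClosed Tower := by
  have : Tower = (⋂ j, {x | x j ∈ FinU j}) ∩
      ⋂ f, ⋂ (_ : Tet f), ⋂ j, {x | pushU f (x j) = x (f j)} := by
    ext x
    simp [Tower]
  rw [this]
  refine IsClosed.inter (isClosed_iInter fun j => ?_)
    (isClosed_iInter fun f => isClosed_iInter fun _ => isClosed_iInter fun j => ?_)
  · exact (FinU_isClosed j).preimage (continuous_apply j)
  · exact isClosed_eq ((push_continuous f).comp (continuous_apply j)) (continuous_apply (f j))

theorem Tower_add {x y : ℕ → Ultrafilter (ℕ → ℕ)} (hx : x ∈ Tower) (hy : y ∈ Tower) :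
    x + y ∈ Tower := by
  refine ⟨fun j => ?_, fun f hf j => ?_⟩
  · simpa using FinU_add (hx.1 j) (hy.1 j)
  · rw [Pi.add_apply, push_add hf.1 (hx.1 j) (hy.1 j), hx.2 f hf, hy.2 f hf]
    rfl

theorem exists_idempotent_FinU_one : ∃ u ∈ FinU 1, u + u = u := by
  refine exists_idempotent_in_compact_add_subsemigroup
    (fun V => Ultrafilter.continuous_add_left V) (FinU 1)
    ⟨(hyperfilter ℕ).map fun n => Pi.single n 1, fun n => ?_⟩ (FinU_isClosed 1).isCompact
    fun U hU V hV => by simpa using FinU_add hU hV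
  have h : ∀ᶠ i in (hyperfilter ℕ : Filter ℕ), n ≤ i :=
    Nat.hyperfilter_le_atTop (eventually_ge_atTop n)
  change ∀ᶠ i in (hyperfilter ℕ : Filter ℕ), _
  filter_upwards [h] with i hi
  refine ⟨⟨i + 1, fun t => ?_, fun t ht => ?_, i, Nat.lt_succ_self i, by simp⟩, fun t ht => ?_⟩
  · by_cases h : t = i
    · simp [h]
    · simp [h]
  · exact Pi.single_eq_of_ne (by omega) _
  · exact Pi.single_eq_of_ne (by omega) _

theorem pi_continuous_add_right (r : ℕ → Ultrafilter (ℕ → ℕ)) : Continuous fun x => x + r :=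
  continuous_pi fun j => (Ultrafilter.continuous_add_left (r j)).comp (continuous_apply j)

/-- The multiples `j · u` of an idempotent `u` on `FIN_1` form an idempotent tower, because
`f (j · b) = f j · b` for `b` with values in `{0, 1}`. -/
theorem exists_idempotent_Tower : ∃ x ∈ Tower, x + x = x := by
  obtain ⟨u, hu, huu⟩ := exists_idempotent_FinU_one
  let g : ℕ → ℕ → ℕ := fun v t => if t = 0 then 0 else v
  refine ⟨fun j => pushU (g j) u, ⟨fun j n => ?_, fun f hf j => ?_⟩, funext fun j => ?_⟩
  · rw [eventually_push]
    filter_upwards [hu n] with b ⟨⟨N, hb1, hb2, p, hp, hbp⟩, hb4⟩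
    refine ⟨⟨N, fun t => ?_, fun t ht => ?_, p, hp, ?_⟩, fun t ht => ?_⟩
    · simp only [g, Function.comp_apply]
      split_ifs <;> simp
    · simp [g, hb2 t ht]
    · simp [g, hbp]
    · simp [g, hb4 t ht]
  · refine Ultrafilter.coe_inj.1 (Filter.ext' fun p => ?_)
    rw [eventually_push, eventually_push, eventually_push]
    have : ∀ b : ℕ → ℕ, f ∘ g j ∘ b = g (f j) ∘ b := fun b => by
      funext t
      simp only [g, Function.comp_apply]
      split_ifs <;> simp [hf.1]
    simp only [this]
  · rw [Pi.add_apply, ← push_add (f := g j) (by simp [g]) hu hu, huu]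

/-- `x j` absorbs on its right all `x i` with `i ≤ p`, `i ≤ j`. -/
def RightAbsorb (p : ℕ) (x : ℕ → Ultrafilter (ℕ → ℕ)) : Prop :=
  ∀ i, i ≤ p → ∀ j, i ≤ j → x j + x i = x j

/-- The tower `x` below `p`, continued by the descending sums `x j + x (j - 1) + ⋯ + x p`. -/
def descend (p : ℕ) (x : ℕ → Ultrafilter (ℕ → ℕ)) : ℕ → Ultrafilter (ℕ → ℕ)
  | 0 => x 0
  | j + 1 => if j + 1 ≤ p then x (j + 1) else x (j + 1) + descend p x j

theorem descend_of_le {p : ℕ} {x : ℕ → Ultrafilter (ℕ → ℕ)} {j : ℕ} (h : j ≤ p) :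
    descend p x j = x j := by
  cases j with
  | zero => rfl
  | succ j => simp [descend, h]

theorem descend_mem_Tower {p : ℕ} {x : ℕ → Ultrafilter (ℕ → ℕ)} (hx : x ∈ Tower)
    (hxx : ∀ j, x j + x j = x j) (habs : RightAbsorb p x) : descend (p + 1) x ∈ Tower := by
  have hmem : ∀ j, descend (p + 1) x j ∈ FinU j := fun j => by
    induction j with
    | zero => exact hx.1 0
    | succ j ih =>
      rw [descend]
      split_ifs
      · exact hx.1 _
      · simpa using FinU_add (hx.1 (j + 1)) ih
  refine ⟨hmem, fun f hf j => ?_⟩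
  induction j with
  | zero => rw [hf.1]; simpa [descend, hf.1] using hx.2 f hf 0
  | succ j ih =>
    rcases le_or_gt (j + 1) (p + 1) with h | h
    · rw [descend_of_le h, hx.2 f hf, descend_of_le ((hf.le_self _).trans h)]
    · have hd : descend (p + 1) x (j + 1) = x (j + 1) + descend (p + 1) x j := by
        rw [descend, if_neg (by omega)]
      rw [hd, push_add hf.1 (hx.1 _) (hmem _), ih, hx.2 f hf]
      have h1 := (hf.2 j).1
      have h2 := (hf.2 j).2
      rcases (by omega : f (j + 1) = f j + 1 ∨ f (j + 1) = f j) with h | h <;> rw [h]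
      · rcases le_or_gt (f j + 1) (p + 1) with h' | h'
        · rw [descend_of_le h', descend_of_le (by omega), habs _ (by omega) _ (by omega)]
        · conv_rhs => rw [descend, if_neg (by omega)]
      · -- idempotence absorbs a repeated level
        rcases Nat.eq_zero_or_pos (f j) with h0 | h0
        · rw [h0, descend, hxx]
        · obtain ⟨t, ht⟩ := Nat.exists_eq_add_of_lt h0
          rw [zero_add] at ht
          rw [ht, descend]
          split_ifs
          · rw [hxx]
          · rw [← add_assoc, hxx]

theorem descend_add {p : ℕ} {x : ℕ → Ultrafilter (ℕ → ℕ)} (hxx : ∀ j, x j + x j = x j) {j : ℕ}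
    (hj : p ≤ j) : descend p x j + x p = descend p x j := by
  induction j, hj using Nat.le_induction with
  | base => rw [descend_of_le le_rfl, hxx]
  | succ j hj ih => rw [descend, if_neg (by omega), add_assoc, ih]

/-- Right absorption is obtained one level at a time: the towers that agree with `x` up to level
`p + 1` and absorb `x (p + 1)` from there on form a closed subsemigroup, nonempty because it
contains a tower of descending sums. -/
theorem exists_rightAbsorb (p : ℕ) : ∃ x ∈ Tower, (∀ j, x j + x j = x j) ∧ RightAbsorb p x := by
  induction p with
  | zero =>
    obtain ⟨x, hx, hxx⟩ := exists_idempotent_Tower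
    refine ⟨x, hx, fun j => congrFun hxx j, fun i hi j _ => ?_⟩
    rw [Nat.le_zero.1 hi, eq_pure_of_mem_FinU_zero (hx.1 0), add_pure_zero]
  | succ p ih =>
    obtain ⟨x, hx, hxx, habs⟩ := ih
    obtain ⟨y, ⟨⟨hy, hyx⟩, hya⟩, hyy⟩ := exists_idempotent_in_compact_add_subsemigroup
      pi_continuous_add_right
      ((Tower ∩ ⋂ i, ⋂ (_ : i ≤ p + 1), {y | y i = x i}) ∩
        ⋂ j, ⋂ (_ : p + 1 ≤ j), {y | y j + x (p + 1) = y j})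
      ⟨descend (p + 1) x, ⟨descend_mem_Tower hx hxx habs, by
        simp only [Set.mem_iInter]; exact fun i hi => descend_of_le hi⟩, by
        simp only [Set.mem_iInter]; exact fun j hj => descend_add hxx hj⟩
      (IsClosed.isCompact <| (Tower_isClosed.inter <| isClosed_iInter fun i =>
        isClosed_iInter fun _ => isClosed_eq (continuous_apply i) continuous_const).inter <|
        isClosed_iInter fun j => isClosed_iInter fun _ =>
          isClosed_eq ((Ultrafilter.continuous_add_left _).comp (continuous_apply j))
            (continuous_apply j))
      (by
        rintro y ⟨⟨hy, hyx⟩, hya⟩ z ⟨⟨hz, hzx⟩, hza⟩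
        simp only [Set.mem_iInter] at hyx hya hzx hza
        refine ⟨⟨Tower_add hy hz, ?_⟩, ?_⟩ <;> simp only [Set.mem_iInter]
        · intro i hi
          have h1 : y i = x i := hyx i hi
          have h2 : z i = x i := hzx i hi
          change y i + z i = x i
          rw [h1, h2, hxx]
        · intro j hj
          have h2 : z j + x (p + 1) = z j := hza j hj
          change y j + z j + x (p + 1) = y j + z j
          rw [add_assoc, h2])
    simp only [Set.mem_iInter] at hyx hya
    have hyx' : ∀ i, i ≤ p + 1 → y i = x i := hyx
    have hya' : ∀ j, p + 1 ≤ j → y j + x (p + 1) = y j := hya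
    refine ⟨y, hy, fun j => congrFun hyy j, fun i hi j hij => ?_⟩
    rw [hyx' i hi]
    rcases le_or_gt (p + 1) j with hj | hj
    · rcases Nat.lt_or_ge i (p + 1) with h | h
      · rw [← hya' j hj, add_assoc, habs i (by omega) _ (by omega)]
      · rw [show i = p + 1 by omega, hya' j hj]
    · rw [hyx' j hj.le, habs i (by omega) j hij]

/-- The ascending sums `x 0 + x 1 + ⋯ + x j`. -/
def ascend (x : ℕ → Ultrafilter (ℕ → ℕ)) : ℕ → Ultrafilter (ℕ → ℕ)
  | 0 => x 0
  | j + 1 => ascend x j + x (j + 1)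

/-- For each `k` there is an equivariant tower with `x i + x j = x (max i j)` for `i, j ≤ k`. -/
theorem exists_tower (k : ℕ) : ∃ x ∈ Tower,
    ∀ i, i ≤ k → ∀ j, j ≤ k → x i + x j = x (max i j) := by
  obtain ⟨x, hx, hxx, habs⟩ := exists_rightAbsorb k
  have hself : ∀ j, ascend x j + x j = ascend x j := fun j => by
    cases j with
    | zero => exact hxx 0
    | succ j => rw [ascend, add_assoc, hxx]
  have hmem : ∀ j, ascend x j ∈ FinU j := fun j => by
    induction j with
    | zero => exact hx.1 0
    | succ j ih => simpa [ascend] using FinU_add ih (hx.1 (j + 1))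
  have hright : ∀ j, j ≤ k → ∀ i, i ≤ j → ascend x j + x i = ascend x j := fun j hj i hij => by
    rw [← hself j, add_assoc, habs i (by omega) j hij]
  have hlow : ∀ j, j ≤ k → ∀ i, i ≤ j → ascend x j + ascend x i = ascend x j := fun j hj i => by
    induction i with
    | zero => exact hright j hj 0
    | succ i ih =>
      intro hi
      rw [ascend, ← add_assoc, ih (by omega), hright j hj _ hi]
  have hhigh : ∀ i, i ≤ k → ∀ j, i ≤ j → ascend x i + ascend x j = ascend x j := by
    intro i hi j hij
    induction j, hij using Nat.le_induction with
    | base => exact hlow i hi i le_rfl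
    | succ j hj ih => rw [ascend, ← add_assoc, ih]
  refine ⟨ascend x, ⟨hmem, fun f hf j => ?_⟩, fun i hi j hj => ?_⟩
  · induction j with
    | zero => rw [hf.1]; simpa [ascend, hf.1] using hx.2 f hf 0
    | succ j ih =>
      rw [ascend, push_add hf.1 (hmem j) (hx.1 _), ih, hx.2 f hf]
      have h1 := (hf.2 j).1
      have h2 := (hf.2 j).2
      rcases (by omega : f (j + 1) = f j + 1 ∨ f (j + 1) = f j) with h | h <;> rw [h]
      · rw [ascend]
      · rw [hself]
  · rcases le_total i j with h | h
    · rw [max_eq_right h, hhigh i hi j h]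
    · rw [max_eq_left h, hlow i hi j h]

/-! ### Reading a tetris subsequence from left to right -/

/-- `∀ᶠ y₀, ∀ᶠ y₁, …, ∀ᶠ y_{e-1}, P [y₀, …, y_{e-1}]`, all quantifiers with respect to `U`. -/
def Iter (U : Ultrafilter (ℕ → ℕ)) : ℕ → (List (ℕ → ℕ) → Prop) → Prop
  | 0, P => P []
  | e + 1, P => ∀ᶠ y in (U : Filter (ℕ → ℕ)), Iter U e fun l => P (y :: l)

/-- An iterated limit along an ultrafilter picks out one colour. -/
theorem exists_colour (U : Ultrafilter (ℕ → ℕ)) (r m : ℕ) (C : List (ℕ → ℕ) → ℕ)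
    (hC : ∀ l, C l < r) : ∃ v ∈ Set.Iio r, Iter U m fun l => C l = v := by
  induction m generalizing C with
  | zero => exact ⟨C [], hC [], rfl⟩
  | succ m ih =>
    exact (Ultrafilter.eventually_exists_mem_iff (Set.finite_Iio r)).1
      (Eventually.of_forall fun y => ih (fun l => C (y :: l)) fun l => hC _)

/-- `Reading k j ℓ b s q as`: the list `as` of elements of `FIN_j` can be completed by reading
`b 0, …, b (ℓ - 1)` from left to right, when the entry currently being summed has partial sum `s`
with maximum `q`. One may stop once `q = j`, add a tetris image of the next `b i` to the current
entry, or, once `q = j`, start a new entry. -/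
inductive Reading (k j : ℕ) : ℕ → (ℕ → ℕ → ℕ) → (ℕ → ℕ) → ℕ → List (ℕ → ℕ) → Prop
  | done (ℓ b s) : Reading k j ℓ b s j [s]
  | step (ℓ b s q f as) : f ∈ TetK k →
      Reading k j ℓ (fun n => b (n + 1)) (s + f ∘ b 0) (max q (f k)) as → Reading k j (ℓ + 1) b s q as
  | cut (ℓ b s as) : Reading k j ℓ b 0 0 as → Reading k j ℓ b s j (s :: as)

theorem Reading.length_pos {k j ℓ : ℕ} {b : ℕ → ℕ → ℕ} {s : ℕ → ℕ} {q : ℕ} {as : List (ℕ → ℕ)}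
    (h : Reading k j ℓ b s q as) : 0 < as.length := by
  induction h with
  | done => simp
  | step _ _ _ _ _ _ _ _ ih => exact ih
  | cut => simp

/-- A stage of the reading process: target level `j`, number `e` of entries to come after the
current one, partial sum `s` of the current entry, its maximum `q`, and the property `P` that the
list consisting of the current entry and the remaining ones should have. -/
structure Stage where
  /-- target level -/
  j : ℕ
  /-- number of entries after the current one -/
  e : ℕ
  /-- partial sum of the current entry -/
  s : ℕ → ℕ
  /-- maximum of the current partial sum -/
  q : ℕ
  /-- desired property of the remaining entries, the current one included -/
  P : List (ℕ → ℕ) → Prop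

/-- The property `P` holds for generic completions of the stage: whenever adding an element of
`FIN_i` raises the maximum of the current entry to `j`, a generic choice of it, followed by generic
entries of level `j`, satisfies `P`. -/
def Stage.Good (k : ℕ) (x : ℕ → Ultrafilter (ℕ → ℕ)) (σ : Stage) : Prop :=
  1 ≤ σ.j ∧ σ.j ≤ k ∧ ∀ i, max σ.q i = σ.j →
    ∀ᶠ y in (x i : Filter (ℕ → ℕ)), Iter (x σ.j) σ.e fun l => σ.P ((σ.s + y) :: l)

/-- The stage after adding `f ∘ b` to the current entry. -/
def Stage.next (k : ℕ) (b : ℕ → ℕ) (f : ℕ → ℕ) (σ : Stage) : Stage :=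
  { σ with s := σ.s + f ∘ b, q := max σ.q (f k) }

/-- The stage after declaring the current entry complete. -/
def Stage.cut (σ : Stage) : Stage :=
  ⟨σ.j, σ.e - 1, 0, 0, fun l => σ.P (σ.s :: l)⟩

section

variable {k : ℕ} {x : ℕ → Ultrafilter (ℕ → ℕ)} {σ : Stage}

theorem Stage.Good.iter (hx : x ∈ Tower) (hσ : σ.Good k x) (hq : σ.q = σ.j) :
    Iter (x σ.j) σ.e fun l => σ.P (σ.s :: l) := by
  have h := hσ.2.2 0 (by simp [hq])
  rw [eq_pure_of_mem_FinU_zero (hx.1 0)] at h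
  simpa using h

theorem Stage.Good.cut (hx : x ∈ Tower) (hσ : σ.Good k x) (hq : σ.q = σ.j) (he : 1 ≤ σ.e) :
    σ.cut.Good k x := by
  refine ⟨hσ.1, hσ.2.1, fun i hi => ?_⟩
  have hi' : i = σ.j := by simpa [Stage.cut] using hi
  subst hi'
  have h := hσ.iter hx hq
  obtain ⟨e, he'⟩ := Nat.exists_eq_add_of_le' he
  rw [he'] at h
  simpa [Stage.cut, he', Iter] using h

/-- The key step: a generic member of `x k` keeps a stage good, since its image under `f` is a
generic member of `x (f k)` and `x (f k) + x i = x (max (f k) i)`. -/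
theorem Stage.Good.next (hx : x ∈ Tower)
    (hadd : ∀ i, i ≤ k → ∀ j, j ≤ k → x i + x j = x (max i j)) (hσ : σ.Good k x)
    {f : ℕ → ℕ} (hf : Tet f) : ∀ᶠ b in (x k : Filter (ℕ → ℕ)), (σ.next k b f).Good k x := by
  have key : ∀ i ∈ Set.Iic k, ∀ᶠ b in (x k : Filter (ℕ → ℕ)), max (max σ.q (f k)) i = σ.j →
      ∀ᶠ y in (x i : Filter (ℕ → ℕ)),
        Iter (x σ.j) σ.e fun l => σ.P ((σ.s + f ∘ b + y) :: l) := by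
    intro i hi
    by_cases hm : max (max σ.q (f k)) i = σ.j
    · have h := hσ.2.2 (max (f k) i) (by rw [← max_assoc, hm])
      rw [← hadd _ (hf.le_self k) _ hi, ← hx.2 f hf, Ultrafilter.eventually_add,
        eventually_push] at h
      filter_upwards [h] with b hb _
      simpa only [add_assoc] using hb
    · exact Eventually.of_forall fun b h => absurd h hm
  filter_upwards [(Set.finite_Iic k).eventually_all.2 key] with b hb
  refine ⟨hσ.1, hσ.2.1, fun i hi => hb i ?_ hi⟩
  have : i ≤ σ.j := hi ▸ le_max_right _ _
  exact this.trans hσ.2.1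

end

/-- Long block sequences all of whose readings, from any of finitely many good stages, have the
desired property. The first block is a generic member of `x k`: it keeps good the finitely many
stages reachable in one step, to which the induction hypothesis applies. -/
theorem exists_blocks {k : ℕ} {x : ℕ → Ultrafilter (ℕ → ℕ)} (hx : x ∈ Tower)
    (hadd : ∀ i, i ≤ k → ∀ j, j ≤ k → x i + x j = x (max i j)) (ℓ : ℕ) (n : ℕ)
    (T : Set Stage) (hT : T.Finite) (hgood : ∀ σ ∈ T, σ.Good k x) :
    ∃ (b : ℕ → ℕ → ℕ) (N : ℕ), IsBlockSeqFin k N ℓ b ∧ (∀ i, i < ℓ → ∀ t, t < n → b i t = 0) ∧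
      ∀ σ ∈ T, ∀ as, Reading k σ.j ℓ b σ.s σ.q as → as.length = σ.e + 1 → σ.P as := by
  have hdone : ∀ σ : Stage, σ.Good k x → σ.q = σ.j → σ.e = 0 → σ.P [σ.s] := fun σ hσ hq he => by
    have := hσ.iter hx hq
    rw [he] at this
    exact this
  induction ℓ generalizing n T with
  | zero =>
    refine ⟨0, 0, ⟨by simp, by simp⟩, by simp, fun σ hσ as hp hl => ?_⟩
    have hj := (hgood σ hσ).1
    generalize hj' : σ.j = j at *
    generalize hq' : σ.q = q at *
    generalize hs' : σ.s = s at *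
    generalize hℓ : 0 = ℓ at hp
    cases hp with
    | done => rw [← hs']; exact hdone σ (hgood σ hσ) (by omega) (by simpa using hl.symm)
    | step => omega
    | cut _ _ _ as hp' =>
      exfalso
      generalize hq0 : 0 = q0 at hp'
      cases hp' <;> omega
  | succ ℓ ih =>
    let T' := T ∪ Stage.cut '' {σ ∈ T | σ.q = σ.j ∧ 1 ≤ σ.e}
    have hT' : T'.Finite := hT.union ((hT.subset (Set.sep_subset _ _)).image _)
    have hgood' : ∀ σ ∈ T', σ.Good k x := by
      rintro σ (hσ | ⟨σ, ⟨hσ, hq, he⟩, rfl⟩)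
      · exact hgood σ hσ
      · exact (hgood σ hσ).cut hx hq he
    have hev : ∀ᶠ b in (x k : Filter (ℕ → ℕ)), ∀ σ ∈ T', ∀ f ∈ TetK k, (σ.next k b f).Good k x :=
      hT'.eventually_all.2 fun σ hσ => (TetK_finite k).eventually_all.2 fun f hf =>
        (hgood' σ hσ).next hx hadd hf.1
    obtain ⟨b₀, hb₀, ⟨N₀, hN₀⟩, hn⟩ := (hev.and (hx.1 k n)).exists
    let T'' := Set.image2 (fun σ f => σ.next k b₀ f) T' (TetK k)
    have hgood'' : ∀ σ ∈ T'', σ.Good k x := by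
      rintro _ ⟨σ, hσ, f, hf, rfl⟩
      exact hb₀ σ hσ f hf
    obtain ⟨b, N, hbN, hbn, hb⟩ := ih (max N₀ n) T'' (hT'.image2 _ (TetK_finite k)) hgood''
    have hstep : ∀ σ ∈ T', ∀ f ∈ TetK k, ∀ as,
        Reading k σ.j ℓ b (σ.s + f ∘ b₀) (max σ.q (f k)) as → as.length = σ.e + 1 → σ.P as :=
      fun σ hσ f hf as hp hl => hb _ ⟨σ, hσ, f, hf, rfl⟩ as hp hl
    let B : ℕ → ℕ → ℕ := fun i => Nat.casesOn i b₀ b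
    refine ⟨B, max N₀ N, ⟨fun i hi => ?_, fun i hi => ?_⟩, fun i hi t ht => ?_,
      fun σ hσ as hp hl => ?_⟩
    · cases i with
      | zero =>
        obtain ⟨h1, h2, p, hp, h3⟩ := hN₀
        exact ⟨h1, fun t ht => h2 t (le_trans (le_max_left _ _) ht), p, lt_max_of_lt_left hp, h3⟩
      | succ i =>
        obtain ⟨h1, h2, p, hp, h3⟩ := hbN.1 i (by omega)
        exact ⟨h1, fun t ht => h2 t (le_trans (le_max_right _ _) ht), p, lt_max_of_lt_right hp, h3⟩
    · cases i with
      | zero =>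
        intro t ht t' ht'
        have h1 : t < N₀ := by
          by_contra! h
          exact ht (hN₀.2.1 t h)
        have h2 : N₀ ≤ t' := by
          by_contra! h
          exact ht' (hbn 0 (by omega) t' (lt_max_of_lt_left h))
        omega
      | succ i => exact hbN.2 i (by omega)
    · cases i with
      | zero => exact hn t ht
      | succ i => exact hbn i (by omega) t (lt_max_of_lt_right ht)
    · have hj := (hgood σ hσ).1
      generalize hj' : σ.j = j at hp hj
      generalize hq' : σ.q = q at hp
      generalize hs' : σ.s = s at hp
      generalize hℓ : ℓ + 1 = L at hp
      cases hp with
      | done => rw [← hs']; exact hdone σ (hgood σ hσ) (by omega) (by simpa using hl.symm)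
      | step L _ _ _ f _ hf hp' =>
        obtain rfl : ℓ = L := by omega
        subst hj' hq' hs'
        exact hstep σ (Or.inl hσ) f hf as hp' hl
      | cut _ _ _ as hp' =>
        have hpos := hp'.length_pos
        have hl' : as.length = σ.e := by simpa using hl
        have hmem : σ.cut ∈ T' := Or.inr ⟨σ, ⟨hσ, by omega, by omega⟩, rfl⟩
        -- the new entry has maximum `0 < j`, so the reading must go on
        subst hj' hs'
        generalize hq0 : 0 = q0 at hp'
        generalize hs0 : (0 : ℕ → ℕ) = s0 at hp'
        cases hp' with
        | done => omega
        | cut => omega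
        | step L _ _ _ f _ hf hp'' =>
          obtain rfl : ℓ = L := by omega
          subst hq0 hs0
          exact hstep σ.cut hmem f hf as hp'' (by simp only [Stage.cut]; omega)

/-- Every member of `TS_j(b_0,…,b_{ℓ-1})^[m]` is produced by a reading. -/
theorem reading_of_mem_TSmfin {k j n m ℓ N : ℕ} (hm : 1 ≤ m) {b : ℕ → ℕ → ℕ}
    (hb : IsBlockSeqFin k N ℓ b) {a : Fin m → ℕ → ℕ} (ha : a ∈ TSmfin k j n m ℓ b) :
    Reading k j ℓ b 0 0 (List.ofFn a) := by
  obtain ⟨-, ns, js, fs, h0, hlt, hle, hfs, hd⟩ := ha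
  have hmono : ∀ e d, d + e = m → ns d ≤ ns m := fun e => by
    induction e with
    | zero => rintro d rfl; exact le_rfl
    | succ e ih => exact fun d h => (hlt d (by omega)).le.trans (ih (d + 1) (by omega))
  have main : ∀ w d i, ∀ hdm : d < m, ns d ≤ i → i ≤ ns (d + 1) → (ns m - i) + (m - d) ≤ w →
      Reading k j (ℓ - i) (fun t => b (t + i)) (∑ t ∈ Finset.Ico (ns d) i, fs t ∘ b t)
        ((Finset.Ico (ns d) i).sup js) ((List.ofFn a).drop d) := by
    intro w
    induction w with
    | zero => intros; omega
    | succ w ih =>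
      intro d i hdm hi1 hi2 hw
      have hns := hmono (m - (d + 1)) (d + 1) (by omega)
      obtain ⟨hd1, ⟨i₀, hi₀, hi₀', hji₀⟩, hd3⟩ := hd ⟨d, hdm⟩
      dsimp only at hd1 hi₀ hi₀' hd3
      rcases hi2.lt_or_eq with hi | rfl
      · have hil : ℓ - i = (ℓ - (i + 1)) + 1 := by omega
        have hf := hfs i (by omega)
        rw [hil]
        refine Reading.step _ _ _ _ (fun t => fs i (min t k)) _ hf.2.mem_TetK ?_
        have h := ih d (i + 1) hdm (by omega) hi (by omega)
        have e1 : (fun t => fs i (min t k)) ∘ b i = fs i ∘ b i := by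
          funext t
          simp [(hb.1 i (by omega)).1 t]
        rw [Finset.sum_Ico_succ_top hi1] at h
        rw [← Finset.insert_Ico_right_eq_Ico_add_one hi1, Finset.sup_insert, sup_comm] at h
        simp only [min_self, hf.2.top, zero_add, e1]
        have e2 : (fun t => b (t + 1 + i)) = fun t => b (t + (i + 1)) := by
          funext t
          congr 1
          omega
        rw [e2]
        exact h
      · have hq : (Finset.Ico (ns d) (ns (d + 1))).sup js = j := by
          refine le_antisymm (Finset.sup_le fun t ht => ?_) ?_
          · exact hd1 t (Finset.mem_Ico.1 ht).1 (Finset.mem_Ico.1 ht).2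
          · rw [← hji₀]
            exact Finset.le_sup (f := js) (Finset.mem_Ico.2 ⟨hi₀, hi₀'⟩)
        have hdrop : (List.ofFn a).drop d = a ⟨d, hdm⟩ :: (List.ofFn a).drop (d + 1) := by
          rw [List.drop_eq_getElem_cons (by simpa using hdm)]
          simp
        rw [hq, hdrop, ← hd3]
        rcases Nat.lt_or_ge (d + 1) m with h | h
        · refine Reading.cut _ _ _ _ ?_
          have := ih (d + 1) (ns (d + 1)) h le_rfl (hlt _ h).le (by omega)
          simpa using this
        · rw [List.drop_of_length_le (by simpa using h)]
          exact Reading.done _ _ _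
  have h := main _ 0 0 (by omega) h0.le (Nat.zero_le _) le_rfl
  simpa [h0] using h

/-! ### Infinite ambient set, and compactness -/

/-- The theorem for colourings of block sequences in `ℕ` instead of `{0,…,n-1}`. -/
theorem exists_monochromatic (m k ℓ r : ℕ) (hm : 1 ≤ m) (C : (Fin m → ℕ → ℕ) → ℕ)
    (hC : ∀ t, C t < r) : ∃ (b : ℕ → ℕ → ℕ) (N : ℕ), IsBlockSeqFin k N ℓ b ∧
      ∀ j, 1 ≤ j → j ≤ k → ∃ v, ∀ n, ∀ a ∈ TSmfin k j n m ℓ b, C a = v := by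
  obtain ⟨x, hx, hadd⟩ := exists_tower k
  let C' : List (ℕ → ℕ) → ℕ := fun l => C fun d => l.getD d 0
  choose v _ hv using fun j => exists_colour (x j) r m C' fun l => hC _
  let σ : ℕ → Stage := fun j => ⟨j, m - 1, 0, 0, fun l => C' l = v j⟩
  obtain ⟨b, N, hbN, -, hb⟩ := exists_blocks hx hadd ℓ 0 (σ '' Set.Icc 1 k)
    ((Set.finite_Icc 1 k).image σ) (by
      rintro _ ⟨j, ⟨hj1, hjk⟩, rfl⟩
      refine ⟨hj1, hjk, fun i hi => ?_⟩
      obtain rfl : i = j := by simpa [σ] using hi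
      have h := hv i
      obtain ⟨e, rfl⟩ := Nat.exists_eq_add_of_le' hm
      simpa [σ, Iter] using h)
  refine ⟨b, N, hbN, fun j hj1 hjk => ⟨v j, fun n a ha => ?_⟩⟩
  have h := hb (σ j) ⟨j, ⟨hj1, hjk⟩, rfl⟩ _ (reading_of_mem_TSmfin hm hbN ha) (by simp [σ]; omega)
  have e : (fun d : Fin m => (List.ofFn a).getD d 0) = a := by
    funext d
    simp [List.getD]
  simpa [σ, C', e] using h

/-- Finitary multidimensional Gowers theorem for generalized tetris operations. -/
theorem gowers_generalized_tetris_multidim_finitary (m k ℓ r : ℕ)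
    (hm : 1 ≤ m) (hk : 1 ≤ k) (hℓ : 1 ≤ ℓ) (hr : 1 ≤ r) :
    ∃ n : ℕ, ∀ c : (Fin m → ℕ → ℕ) → ℕ,
      (∀ t : Fin m → ℕ → ℕ, (∃ j, 1 ≤ j ∧ j ≤ k ∧ IsBlockTupleFin j n m t) → c t < r) →
      ∃ b : ℕ → ℕ → ℕ, IsBlockSeqFin k n ℓ b ∧
        ∀ j, 1 ≤ j → j ≤ k →
          ∀ a ∈ TSmfin k j n m ℓ b, ∀ a' ∈ TSmfin k j n m ℓ b, c a = c a' := by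
  by_contra! hcon
  choose c hc hbad using hcon
  -- the limit of the bad colourings along a nonprincipal ultrafilter
  have hlim : ∀ t, ∃ v ∈ Set.Iio r, ∀ᶠ n in (hyperfilter ℕ : Filter ℕ), c n t % r = v := fun t =>
    (Ultrafilter.eventually_exists_mem_iff (Set.finite_Iio r)).1
      (Eventually.of_forall fun n => ⟨c n t % r, Nat.mod_lt _ hr, rfl⟩)
  choose C hC hCc using hlim
  obtain ⟨b, N, hbN, hb⟩ := exists_monochromatic m k ℓ r hm C hC
  have hfin : {a : Fin m → ℕ → ℕ | ∀ d i, a d i ≤ k ∧ (N ≤ i → a d i = 0)}.Finite := by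
    refine Set.Finite.of_finite_image (f := fun a d (i : Fin N) => a d i) ?_ ?_
    · refine (Set.Finite.pi' (t := fun _ : Fin m => {g : Fin N → ℕ | ∀ i, g i ∈ Set.Iic k})
        fun _ => Set.Finite.pi' fun _ => Set.finite_Iic k).subset ?_
      rintro _ ⟨a, ha, rfl⟩ d i
      exact (ha d i).1
    · intro a ha a' ha' h
      funext d i
      rcases Nat.lt_or_ge i N with hi | hi
      · exact congrFun (congrFun h d) ⟨i, hi⟩
      · rw [(ha d i).2 hi, (ha' d i).2 hi]
  have hN : ∀ᶠ n in (hyperfilter ℕ : Filter ℕ), N ≤ n :=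
    Nat.hyperfilter_le_atTop (eventually_ge_atTop N)
  obtain ⟨n, hn, hNn⟩ := ((hfin.eventually_all.2 fun a _ => hCc a).and hN).exists
  have hbn : IsBlockSeqFin k n ℓ b := by
    refine ⟨fun i hi => ?_, hbN.2⟩
    obtain ⟨h1, h2, p, hp, h3⟩ := hbN.1 i hi
    exact ⟨h1, fun t ht => h2 t (hNn.trans ht), p, hp.trans_le hNn, h3⟩
  obtain ⟨j, hj1, hjk, a, ha, a', ha', hne⟩ := hbad n b hbn
  obtain ⟨v, hv⟩ := hb j hj1 hjk
  have key : ∀ a ∈ TSmfin k j n m ℓ b, c n a = v := by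
    intro a ha
    rw [← hv n a ha, ← hn a ?_, Nat.mod_eq_of_lt (hc n a ⟨j, hj1, hjk, ha.1⟩)]
    obtain ⟨hblock, ns, js, fs, h0, hlt, hle, hfs, hd⟩ := ha
    refine fun d i => ⟨((hblock.1 d).1 i).trans hjk, fun hi => ?_⟩
    have hmono : ∀ e t, t + e = m → ns t ≤ ns m := fun e => by
      induction e with
      | zero => rintro t rfl; exact le_rfl
      | succ e ih => exact fun t h => (hlt t (by omega)).le.trans (ih (t + 1) (by omega))
    have hns := hmono (m - (d.val + 1)) (d.val + 1) (by omega)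
    rw [(hd d).2.2, Finset.sum_apply]
    refine Finset.sum_eq_zero fun t ht => ?_
    have ht' := (Finset.mem_Ico.1 ht).2
    rw [Function.comp_apply, (hbN.1 t (by omega)).2.1 i hi, (hfs t (by omega)).2.zero]
  exact hne ((key a ha).trans (key a' ha').symm)
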